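/- Let l_1, l_2 be two distinct lines in P^2 and P_1,...,P_6 distinct points with P_1,P_2,P_3 ∈ l_1 \ l_2, P_4,P_5 ∈ l_2 \ l_1, and P_6 ∉ l_1 ∪ l_2. For a positive integer m, let Z = mP_1 + ... + mP_6. Then reg(Z) = 3m - 1, while the Segre bound satisfies T(Z) = T_2(Z) = 3m; in particular reg(Z) < T(Z). -/

import Mathlib

open MvPolynomial

noncomputable section

/-- The defining prime ideal of the point of projective space with homogeneous
coordinates `p`: the ideal generated by the linear forms vanishing at `p`. -/
def pointIdeal {K : Type} [Field K] {N : ℕ} (p : Fin N → K) :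
    Ideal (MvPolynomial (Fin N) K) :=
  Ideal.span {f | f.IsHomogeneous 1 ∧ eval p f = 0}

/-- The ideal of the fat point scheme `m₁P₁ + ⋯ + m_sP_s`. -/
def fatIdeal {K : Type} [Field K] {N s : ℕ} (p : Fin s → Fin N → K) (m : Fin s → ℕ) :
    Ideal (MvPolynomial (Fin N) K) :=
  ⨅ i, pointIdeal (p i) ^ (m i)

/-- `dim_K` of the degree-`t` graded piece of the ideal `I`. -/
def gradedDim (K : Type) [Field K] {N : ℕ} (I : Ideal (MvPolynomial (Fin N) K)) (t : ℕ) : ℕ :=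
  Module.finrank K ↥(homogeneousSubmodule (Fin N) K t ⊓ I.restrictScalars K)

/-- The Hilbert function of `R/I` in degree `t`. -/
def hilbFn (K : Type) [Field K] {N : ℕ} (I : Ideal (MvPolynomial (Fin N) K)) (t : ℕ) : ℕ :=
  Module.finrank K ↥(homogeneousSubmodule (Fin N) K t) - gradedDim K I t

/-- The regularity index of `R/I` relative to the multiplicity `e`:
the least `t` with `H_{R/I}(t) = e`. -/
def regIndex (K : Type) [Field K] {N : ℕ} (I : Ideal (MvPolynomial (Fin N) K)) (e : ℕ) : ℕ :=
  sInf {t | hilbFn K I t = e}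

/-- The multiplicity `e(R/I) = ∑ C(mᵢ+n-1, n)` of a fat point scheme in `ℙⁿ`. -/
def fatMult (n : ℕ) {s : ℕ} (m : Fin s → ℕ) : ℕ :=
  ∑ i, (m i + n - 1).choose n

/-- The regularity index of the fat point scheme `m₁P₁ + ⋯ + m_sP_s` in `ℙⁿ`. -/
def regFat (K : Type) [Field K] {n s : ℕ} (p : Fin s → Fin (n + 1) → K) (m : Fin s → ℕ) : ℕ :=
  regIndex K (fatIdeal p m) (fatMult n m)

/-- The coordinate vectors `p i` represent distinct points of projective space. -/
def ProjDistinct {K : Type} [Field K] {N s : ℕ} (p : Fin s → Fin N → K) : Prop :=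
  (∀ i, p i ≠ 0) ∧ ∀ i j, i ≠ j → ∀ c : K, p i ≠ c • p j

/-- The points `p i`, `i ∈ Q`, lie on a `j`-dimensional linear subspace of `ℙⁿ`. -/
def OnLinearSubspace {K : Type} [Field K] {N s : ℕ} (p : Fin s → Fin N → K)
    (Q : Finset (Fin s)) (j : ℕ) : Prop :=
  ∃ W : Submodule K (Fin N → K), Module.finrank K ↥W ≤ j + 1 ∧ ∀ i ∈ Q, p i ∈ W

open Classical in
/-- The Segre bound `T(Z) = max {T_j(Z) | j = 1,…,n}` for fat points in `ℙⁿ`. -/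
def segreBound {K : Type} [Field K] (n : ℕ) {s : ℕ} (p : Fin s → Fin (n + 1) → K)
    (m : Fin s → ℕ) : ℕ :=
  (Finset.Icc 1 n).sup fun j =>
    Finset.univ.powerset.sup fun Q =>
      if Q.Nonempty ∧ OnLinearSubspace p Q j then (∑ i ∈ Q, m i + j - 2) / j else 0

/-- The standard coordinate point `(1,0,…,0)`. -/
def stdPt (K : Type) [Field K] (N : ℕ) : Fin N → K := fun j => if (j : ℕ) = 0 then 1 else 0

/-!
Let `L` be the linear form of a line and `S` the set of points on it. Multiplication by `L` and
restriction to the line give an exact sequence relating the ideal of `Z`, the ideal of the residual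
scheme (multiplicities on `S` lowered by one) and an ideal of fat points on `ℙ¹`. On `ℙ¹` fat points
of total multiplicity `e` impose `min (e, t + 1)` conditions in degree `t`. So if the residual
scheme imposes independent conditions in degree `t`, then so does `Z` in degree `t + 1`, provided
that the total multiplicity on the line is at most `t + 2`. Peeling off `l₁`, `l₂` and a
line through `P₆` avoiding the other points lowers `m` by one and the degree by three, which gives
`reg Z ≤ 3m - 1`. Conversely, independent conditions in degree `t` force the total multiplicity
`3m` on `l₁` to be at most `t + 1`.

For the Segre bound, all six points give `T₂ = 3m`, and `T₁ = 3m - 1` because no line contains four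
of the points: a line other than `l₁` and `l₂` meets each of them in at most one point.
-/

section Polynomials

variable {σ R : Type*} [CommRing R]

theorem dvd_sub_aeval {l : MvPolynomial σ R} {y : σ → MvPolynomial σ R}
    (h : ∀ j, l ∣ X j - y j) (f : MvPolynomial σ R) : l ∣ f - aeval y f := by
  have hmod : (Ideal.Quotient.mkₐ R (Ideal.span {l})).comp (aeval y) =
      Ideal.Quotient.mkₐ R (Ideal.span {l}) := by
    ext j
    simp only [AlgHom.comp_apply, aeval_X, Ideal.Quotient.mkₐ_eq_mk]
    exact (Ideal.Quotient.eq.2 (Ideal.mem_span_singleton.2 (h j))).symm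
  rw [← Ideal.mem_span_singleton, ← Ideal.Quotient.eq]
  exact (DFunLike.congr_fun hmod f).symm

theorem exists_isHomogeneous_eq_mul {l f : MvPolynomial σ R} {d t : ℕ}
    (hl : l.IsHomogeneous d) (hf : f.IsHomogeneous (d + t)) (h : l ∣ f) :
    ∃ g, g.IsHomogeneous t ∧ f = l * g := by
  let _ : GradedAlgebra (homogeneousSubmodule σ R) := MvPolynomial.gradedAlgebra
  obtain ⟨g, rfl⟩ := h
  refine ⟨homogeneousComponent t g, homogeneousComponent_isHomogeneous _ _, ?_⟩
  have hcomp (q : MvPolynomial σ R) (i : ℕ) :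
      (DirectSum.decompose (homogeneousSubmodule σ R) q i : MvPolynomial σ R) =
        homogeneousComponent i q :=
    decomposition.decompose'_apply q i
  have hmul := DirectSum.coe_decompose_mul_add_of_left_mem (homogeneousSubmodule σ R)
    (j := t) (b := g) ((mem_homogeneousSubmodule d l).2 hl)
  rwa [hcomp, hcomp, homogeneousComponent_eq_self hf] at hmul

theorem aeval_mem_pow_of_isHomogeneous {A : Type*} [CommRing A] [Algebra R A] {I : Ideal A}
    {y : σ → A} (hy : ∀ j, y j ∈ I) {f : MvPolynomial σ R} {d : ℕ} (hf : f.IsHomogeneous d) :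
    aeval y f ∈ I ^ d := by
  refine Ideal.pow_right_mono (Ideal.span_le.2 (Set.range_subset_iff.2 hy)) d ?_
  rw [Ideal.mem_span_pow_iff_exists_isHomogeneous]
  exact ⟨map (algebraMap R A) f, hf.map _, by rw [aeval_def, eval₂_eq_eval_map]⟩

end Polynomials

section LinearForms

variable {K : Type*} [Field K] {N n : ℕ}

/-- The linear form `∑ⱼ ψ(eⱼ)Xⱼ` whose evaluation at `x` is `ψ x`. Hyperplanes of projective space
are represented by nonzero functionals `ψ` throughout. -/
def linForm : Module.Dual K (Fin N → K) →ₗ[K] MvPolynomial (Fin N) K :=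
  (Pi.basisFun K (Fin N)).dualBasis.constr K X

theorem dualBasis_basisFun (j : Fin N) :
    (Pi.basisFun K (Fin N)).dualBasis j = LinearMap.proj j := by
  ext i
  simp

theorem linForm_proj (j : Fin N) :
    linForm (LinearMap.proj j : Module.Dual K (Fin N → K)) = X j := by
  rw [← dualBasis_basisFun, linForm, Module.Basis.constr_basis]

theorem dual_hom_ext {M : Type*} [AddCommGroup M] [Module K M]
    {F G : Module.Dual K (Fin N → K) →ₗ[K] M}
    (h : ∀ j, F (LinearMap.proj j) = G (LinearMap.proj j)) : F = G :=
  (Pi.basisFun K (Fin N)).dualBasis.ext fun j => by rw [dualBasis_basisFun, h]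

theorem eval_linForm (ψ : Module.Dual K (Fin N → K)) (x : Fin N → K) :
    eval x (linForm ψ) = ψ x := by
  have h : (aeval x).toLinearMap ∘ₗ linForm = Module.Dual.eval K (Fin N → K) x :=
    dual_hom_ext fun j => by simp [linForm_proj]
  simpa [coe_aeval_eq_eval] using DFunLike.congr_fun h ψ

theorem linForm_ne_zero {ψ : Module.Dual K (Fin N → K)} (hψ : ψ ≠ 0) : linForm ψ ≠ 0 := by
  contrapose! hψ
  ext x
  simp [← eval_linForm, hψ]

theorem range_linForm :
    LinearMap.range (linForm (K := K) (N := N)) = homogeneousSubmodule (Fin N) K 1 := by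
  rw [linForm, Module.Basis.constr_range, homogeneousSubmodule_one_eq_span_X]

theorem isHomogeneous_linForm (ψ : Module.Dual K (Fin N → K)) : (linForm ψ).IsHomogeneous 1 := by
  rw [← mem_homogeneousSubmodule, ← range_linForm]
  exact LinearMap.mem_range_self _ _

theorem linForm_dvd_X_sub (ψ : Module.Dual K (Fin N → K)) (j : Fin N) (c : K) :
    linForm ψ ∣ X j - linForm (LinearMap.proj j - c • ψ) := by
  rw [map_sub, linForm_proj, sub_sub_cancel, map_smul, smul_eq_C_mul]
  exact dvd_mul_left _ _

theorem exists_linForm_eq {f : MvPolynomial (Fin N) K} (hf : f.IsHomogeneous 1) :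
    ∃ ψ, linForm ψ = f := by
  rwa [← mem_homogeneousSubmodule, ← range_linForm] at hf

/-- The `K`-algebra homomorphism `f ↦ f ∘ A` of pullback along a linear map `A`, on polynomials. -/
def pullback (A : (Fin n → K) →ₗ[K] (Fin N → K)) :
    MvPolynomial (Fin N) K →ₐ[K] MvPolynomial (Fin n) K :=
  aeval fun j => linForm (LinearMap.proj j ∘ₗ A)

theorem pullback_X (A : (Fin n → K) →ₗ[K] (Fin N → K)) (j : Fin N) :
    pullback A (X j) = linForm (LinearMap.proj j ∘ₗ A) :=
  aeval_X _ _

theorem pullback_linForm (A : (Fin n → K) →ₗ[K] (Fin N → K)) (ψ : Module.Dual K (Fin N → K)) :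
    pullback A (linForm ψ) = linForm (ψ ∘ₗ A) := by
  have h : (pullback A).toLinearMap ∘ₗ linForm = linForm ∘ₗ A.dualMap :=
    dual_hom_ext fun j => by simp [linForm_proj, pullback_X, LinearMap.dualMap_apply']
  exact DFunLike.congr_fun h ψ

theorem isHomogeneous_pullback (A : (Fin n → K) →ₗ[K] (Fin N → K))
    {f : MvPolynomial (Fin N) K} {d : ℕ} (hf : f.IsHomogeneous d) :
    (pullback A f).IsHomogeneous d := by
  have h := hf.aeval (n := 1) (fun j => linForm (LinearMap.proj j ∘ₗ A))
    fun j => isHomogeneous_linForm _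
  rwa [one_mul] at h

theorem pullback_comp {r : ℕ} (A : (Fin n → K) →ₗ[K] (Fin N → K))
    (B : (Fin r → K) →ₗ[K] (Fin n → K)) :
    pullback (A ∘ₗ B) = (pullback B).comp (pullback A) := by
  ext j : 1
  rw [pullback_X, AlgHom.comp_apply, pullback_X, pullback_linForm, LinearMap.comp_assoc]

theorem linForm_dvd_of_pullback_eq_zero {A : (Fin n → K) →ₗ[K] (Fin N → K)}
    {ψ : Module.Dual K (Fin N → K)} (hψ : ψ ≠ 0) (hA : LinearMap.ker ψ ≤ LinearMap.range A)
    {f : MvPolynomial (Fin N) K} (hf : pullback A f = 0) : linForm ψ ∣ f := by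
  obtain ⟨w, hw⟩ : ∃ w, ψ w = 1 := ψ.surjective hψ 1
  let π : (Fin N → K) →ₗ[K] (Fin N → K) := LinearMap.id - ψ.smulRight w
  have hπ (x) : π x ∈ LinearMap.range A := hA (by simp [π, hw])
  obtain ⟨L, hL⟩ := Module.projective_lifting_property A.rangeRestrict (π.codRestrict _ hπ)
    A.surjective_rangeRestrict
  have hAL : A ∘ₗ L = π := LinearMap.ext fun x => congrArg Subtype.val (DFunLike.congr_fun hL x)
  have hvanish : pullback π f = 0 := by
    rw [← hAL, pullback_comp, AlgHom.comp_apply, hf, map_zero]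
  have hdvd (j : Fin N) : linForm ψ ∣ X j - linForm (LinearMap.proj j ∘ₗ π) := by
    have hcomp : LinearMap.proj j ∘ₗ π = LinearMap.proj j - w j • ψ := by
      ext
      simp [π, mul_comm]
    exact hcomp ▸ linForm_dvd_X_sub ψ j (w j)
  have hsub : linForm ψ ∣ f - pullback π f := dvd_sub_aeval hdvd f
  rwa [hvanish, sub_zero] at hsub

end LinearForms

section VanishingOrder

variable {K : Type} [Field K] {N n : ℕ}

theorem linForm_mem_pointIdeal {P : Fin N → K} {ψ : Module.Dual K (Fin N → K)} (h : ψ P = 0) :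
    linForm ψ ∈ pointIdeal P :=
  Ideal.subset_span ⟨isHomogeneous_linForm ψ, by rw [eval_linForm, h]⟩

theorem eval_eq_zero_of_mem_pointIdeal {P : Fin N → K} {f : MvPolynomial (Fin N) K}
    (hf : f ∈ pointIdeal P) : eval P f = 0 :=
  (Ideal.span_le (I := RingHom.ker (eval P))).2 (fun _ hg => hg.2) hf

theorem map_mem_pow_of_mem_pointIdeal_pow {S : Type*} [CommRing S] {P : Fin N → K} {J : Ideal S}
    (φ : MvPolynomial (Fin N) K →+* S) (h : ∀ ψ, ψ P = 0 → φ (linForm ψ) ∈ J) {m : ℕ}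
    {f : MvPolynomial (Fin N) K} (hf : f ∈ pointIdeal P ^ m) : φ f ∈ J ^ m := by
  have hle : (pointIdeal P).map φ ≤ J := by
    rw [pointIdeal, Ideal.map_span, Ideal.span_le]
    rintro _ ⟨g, ⟨hg, hgP⟩, rfl⟩
    obtain ⟨ψ, rfl⟩ := exists_linForm_eq hg
    exact h ψ (by rwa [eval_linForm] at hgP)
  refine Ideal.pow_right_mono hle m ?_
  rw [← Ideal.map_pow]
  exact Ideal.mem_map_of_mem φ hf

theorem pullback_mem_pointIdeal_pow (A : (Fin n → K) →ₗ[K] (Fin N → K)) {Q : Fin n → K} {m : ℕ}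
    {f : MvPolynomial (Fin N) K} (hf : f ∈ pointIdeal (A Q) ^ m) :
    pullback A f ∈ pointIdeal Q ^ m := by
  refine map_mem_pow_of_mem_pointIdeal_pow (pullback A).toRingHom (fun ψ hψ => ?_) hf
  rw [AlgHom.toRingHom_eq_coe, RingHom.coe_coe, pullback_linForm]
  exact linForm_mem_pointIdeal hψ

/-- The substitution `Xⱼ ↦ Pⱼε + T(Xⱼ - Pⱼε)`, for a linear form `ε` with `ε P = 1`. It is the
identity at `T = 1`, and the powers of `T` record the order of vanishing at `P`. -/
def deformation (P : Fin N → K) (ε : Module.Dual K (Fin N → K)) :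
    MvPolynomial (Fin N) K →ₐ[K] Polynomial (MvPolynomial (Fin N) K) :=
  aeval fun j => Polynomial.C (C (P j) * linForm ε) +
    Polynomial.X * Polynomial.C (linForm (LinearMap.proj j - P j • ε))

variable {P : Fin N → K} {ε : Module.Dual K (Fin N → K)}

theorem deformation_linForm (P : Fin N → K) (ε ψ : Module.Dual K (Fin N → K)) :
    deformation P ε (linForm ψ) = Polynomial.C (C (ψ P) * linForm ε) +
      Polynomial.X * Polynomial.C (linForm (ψ - ψ P • ε)) := by
  let CL := (Polynomial.CAlgHom (R := K) (A := MvPolynomial (Fin N) K)).toLinearMap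
  let G : Module.Dual K (Fin N → K) →ₗ[K] Polynomial (MvPolynomial (Fin N) K) :=
    (Module.Dual.eval K _ P).smulRight (CL (linForm ε)) + LinearMap.mulLeft K Polynomial.X ∘ₗ
      CL ∘ₗ linForm ∘ₗ (LinearMap.id - (Module.Dual.eval K _ P).smulRight ε)
  have h : (deformation P ε).toLinearMap ∘ₗ linForm = G :=
    dual_hom_ext fun j => by simp [linForm_proj, deformation, G, CL, C_mul', Polynomial.smul_C]
  simpa [G, CL, C_mul', Polynomial.smul_C] using DFunLike.congr_fun h ψ

theorem eval_one_deformation (P : Fin N → K) (ε : Module.Dual K (Fin N → K))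
    (f : MvPolynomial (Fin N) K) : Polynomial.eval 1 (deformation P ε f) = f := by
  have h : ((Polynomial.aeval (1 : MvPolynomial (Fin N) K)).restrictScalars K).comp
      (deformation P ε) = AlgHom.id K _ := by
    ext j : 1
    simp [deformation, linForm_proj, smul_eq_C_mul]
  simpa using DFunLike.congr_fun h f

theorem deformation_mem_reesAlgebra (hε : ε P = 1) (f : MvPolynomial (Fin N) K) :
    deformation P ε f ∈ reesAlgebra (pointIdeal P) := by
  have hrange : (deformation P ε).range ≤ (reesAlgebra (pointIdeal P)).restrictScalars K := by
    rw [deformation, ← Algebra.adjoin_range_eq_range_aeval, Algebra.adjoin_le_iff]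
    rintro _ ⟨j, rfl⟩
    refine add_mem (Subalgebra.algebraMap_mem (reesAlgebra (pointIdeal P)) _) ?_
    rw [mul_comm, ← pow_one Polynomial.X, Polynomial.C_mul_X_pow_eq_monomial]
    refine reesAlgebra.monomial_mem.2 ?_
    rw [pow_one]
    exact linForm_mem_pointIdeal (by simp [hε])
  exact hrange ⟨f, rfl⟩

theorem mem_pointIdeal_pow_iff_X_pow_dvd_deformation (hε : ε P = 1) {m : ℕ}
    {f : MvPolynomial (Fin N) K} :
    f ∈ pointIdeal P ^ m ↔ Polynomial.X ^ m ∣ deformation P ε f := by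
  refine ⟨fun hf => ?_, fun hf => ?_⟩
  · rw [← Ideal.mem_span_singleton, ← Ideal.span_singleton_pow]
    refine map_mem_pow_of_mem_pointIdeal_pow (deformation P ε).toRingHom (fun ψ hψ => ?_) hf
    rw [Ideal.mem_span_singleton]
    simp [deformation_linForm, hψ]
  · rw [← eval_one_deformation P ε f, Polynomial.eval_eq_sum, Polynomial.sum]
    refine Ideal.sum_mem _ fun i _ => ?_
    rw [one_pow, mul_one]
    by_cases him : m ≤ i
    · exact Ideal.pow_le_pow_right him
        ((mem_reesAlgebra_iff _ _).1 (deformation_mem_reesAlgebra hε f) i)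
    · rw [Polynomial.X_pow_dvd_iff.1 hf i (not_le.1 him)]
      exact Ideal.zero_mem _

theorem exists_dual_eq_one (hP : P ≠ 0) : ∃ ε : Module.Dual K (Fin N → K), ε P = 1 := by
  obtain ⟨k, hk⟩ := Function.ne_iff.1 hP
  exact ⟨(P k)⁻¹ • LinearMap.proj k, inv_mul_cancel₀ hk⟩

theorem mem_pointIdeal_pow_of_linForm_mul_mem (hP : P ≠ 0) {ψ : Module.Dual K (Fin N → K)}
    (hψ : ψ P ≠ 0) {m : ℕ} {f : MvPolynomial (Fin N) K}
    (hf : linForm ψ * f ∈ pointIdeal P ^ m) : f ∈ pointIdeal P ^ m := by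
  obtain ⟨ε, hε⟩ := exists_dual_eq_one hP
  rw [mem_pointIdeal_pow_iff_X_pow_dvd_deformation hε] at hf ⊢
  rw [map_mul] at hf
  refine Polynomial.prime_X.pow_dvd_of_dvd_mul_left m (fun hdvd => ?_) hf
  have hε0 : linForm ε ≠ 0 := linForm_ne_zero (by rintro rfl; simp at hε)
  rw [deformation_linForm, Polynomial.X_dvd_iff] at hdvd
  simp [hψ, hε0] at hdvd

theorem mem_pointIdeal_pow_pred_of_linForm_mul_mem (hP : P ≠ 0) {ψ : Module.Dual K (Fin N → K)}
    (hψ0 : ψ ≠ 0) (hψ : ψ P = 0) {m : ℕ} {f : MvPolynomial (Fin N) K}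
    (hf : linForm ψ * f ∈ pointIdeal P ^ m) : f ∈ pointIdeal P ^ (m - 1) := by
  obtain ⟨ε, hε⟩ := exists_dual_eq_one hP
  obtain _ | m := m
  · simp
  rw [mem_pointIdeal_pow_iff_X_pow_dvd_deformation hε] at hf ⊢
  simp only [map_mul, deformation_linForm, hψ, map_zero, zero_mul, zero_add, zero_smul, sub_zero,
    pow_succ', mul_assoc] at hf
  have hdvd := (mul_dvd_mul_iff_left Polynomial.X_ne_zero).1 hf
  refine Polynomial.prime_X.pow_dvd_of_dvd_mul_left m (fun h => ?_) hdvd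
  rw [Polynomial.X_dvd_iff, Polynomial.coeff_C_zero] at h
  exact linForm_ne_zero hψ0 h

end VanishingOrder

section FatIdeals

variable {K : Type} [Field K] {N s : ℕ}

theorem mem_fatIdeal {p : Fin s → Fin N → K} {m : Fin s → ℕ} {f : MvPolynomial (Fin N) K} :
    f ∈ fatIdeal p m ↔ ∀ i, f ∈ pointIdeal (p i) ^ m i :=
  Submodule.mem_iInf _

/-- The multiplicities of the residual scheme of `m₁P₁ + ⋯ + m_sP_s` with respect to a hyperplane
passing through the points `Pᵢ`, `i ∈ S`. -/
def residualMult (S : Finset (Fin s)) (m : Fin s → ℕ) (i : Fin s) : ℕ :=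
  if i ∈ S then m i - 1 else m i

theorem linForm_mul_mem_fatIdeal {p : Fin s → Fin N → K} {m : Fin s → ℕ} {S : Finset (Fin s)}
    {ψ : Module.Dual K (Fin N → K)} (hS : ∀ i ∈ S, ψ (p i) = 0) {f : MvPolynomial (Fin N) K}
    (hf : f ∈ fatIdeal p (residualMult S m)) : linForm ψ * f ∈ fatIdeal p m := by
  rw [mem_fatIdeal] at hf ⊢
  intro i
  have hfi := hf i
  rw [residualMult] at hfi
  split_ifs at hfi with hi
  · refine Ideal.pow_le_pow_right (show m i ≤ 1 + (m i - 1) by omega) ?_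
    rw [pow_add, pow_one]
    exact Ideal.mul_mem_mul (linForm_mem_pointIdeal (hS i hi)) hfi
  · exact Ideal.mul_mem_left _ _ hfi

theorem mem_fatIdeal_residualMult_of_linForm_mul_mem {p : Fin s → Fin N → K}
    (hp : ∀ i, p i ≠ 0) {m : Fin s → ℕ} {S : Finset (Fin s)} {ψ : Module.Dual K (Fin N → K)}
    (hψ : ψ ≠ 0) (hS : ∀ i, ψ (p i) = 0 → i ∈ S) {f : MvPolynomial (Fin N) K}
    (hf : linForm ψ * f ∈ fatIdeal p m) : f ∈ fatIdeal p (residualMult S m) := by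
  rw [mem_fatIdeal] at hf ⊢
  intro i
  by_cases hi : ψ (p i) = 0
  · rw [residualMult, if_pos (hS i hi)]
    exact mem_pointIdeal_pow_pred_of_linForm_mul_mem (hp i) hψ hi (hf i)
  · refine Ideal.pow_le_pow_right ?_ (mem_pointIdeal_pow_of_linForm_mul_mem (hp i) hi (hf i))
    rw [residualMult]
    split_ifs <;> omega

theorem fatMult_eq_fatMult_residualMult_add (n : ℕ) (S : Finset (Fin s)) (m : Fin s → ℕ) :
    fatMult (n + 2) m =
      fatMult (n + 2) (residualMult S m) + ∑ i ∈ S, (m i + n).choose (n + 1) := by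
  rw [fatMult, fatMult, ← Fintype.sum_ite_mem S, ← Finset.sum_add_distrib]
  refine Finset.sum_congr rfl fun i _ => ?_
  rw [residualMult]
  split_ifs with hi
  · obtain _ | k := m i
    · simp
    · rw [show k + 1 + (n + 2) - 1 = k + n + 1 + 1 by omega, Nat.choose_succ_succ,
        show k + 1 - 1 + (n + 2) - 1 = k + n + 1 by omega, show k + 1 + n = k + n + 1 by omega,
        add_comm]
  · rw [add_zero]

end FatIdeals

section HilbertFunctions

variable {K : Type} [Field K] {N n s : ℕ}

instance finite_homogeneousSubmodule (N t : ℕ) :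
    Module.Finite K (homogeneousSubmodule (Fin N) K t) :=
  Module.Finite.iff_fg.2 (homogeneousSubmodule_fg _ _ _)

theorem finrank_homogeneousSubmodule (K : Type) [Field K] (n t : ℕ) :
    Module.finrank K (homogeneousSubmodule (Fin (n + 1)) K t) = (t + n).choose n := by
  have hexp : {d : Fin (n + 1) →₀ ℕ | d.degree = t} =
      (Finset.univ : Finset (Fin (n + 1))).finsuppAntidiag t := by
    ext d
    simp [Finset.mem_finsuppAntidiag, Finsupp.degree_eq_sum]
  have hcard := Module.finrank_eq_card_basis (basisRestrictSupport K
    ((Finset.univ : Finset (Fin (n + 1))).finsuppAntidiag t : Set (Fin (n + 1) →₀ ℕ)))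
  rw [homogeneousSubmodule_eq_finsupp_supported, hexp, ← restrictSupport, hcard]
  simp only [Finset.coe_sort_coe, Fintype.card_coe, Finset.card_finsuppAntidiag_nat_eq_choose,
    Finset.card_univ, Fintype.card_fin]
  rw [show n + 1 + t - 1 = t + n by omega, Nat.choose_symm_add]

theorem gradedDim_le_finrank (I : Ideal (MvPolynomial (Fin N) K)) (t : ℕ) :
    gradedDim K I t ≤ Module.finrank K (homogeneousSubmodule (Fin N) K t) :=
  Submodule.finrank_mono inf_le_left

theorem hilbFn_add_gradedDim (I : Ideal (MvPolynomial (Fin N) K)) (t : ℕ) :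
    hilbFn K I t + gradedDim K I t = Module.finrank K (homogeneousSubmodule (Fin N) K t) :=
  Nat.sub_add_cancel (gradedDim_le_finrank I t)

theorem hilbFn_top (t : ℕ) : hilbFn K (⊤ : Ideal (MvPolynomial (Fin N) K)) t = 0 := by
  rw [hilbFn, gradedDim, Submodule.restrictScalars_top, inf_top_eq, Nat.sub_self]

theorem hilbFn_inf_le (I J : Ideal (MvPolynomial (Fin N) K)) (t : ℕ) :
    hilbFn K (I ⊓ J) t ≤ hilbFn K I t + hilbFn K J t := by
  let V (I : Ideal (MvPolynomial (Fin N) K)) : Submodule K (MvPolynomial (Fin N) K) :=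
    homogeneousSubmodule (Fin N) K t ⊓ I.restrictScalars K
  have hinf : V I ⊓ V J = V (I ⊓ J) := (inf_inf_distrib_left _ _ _).symm
  have hsup : Module.finrank K ↥(V I ⊔ V J) + gradedDim K (I ⊓ J) t =
      gradedDim K I t + gradedDim K J t := by
    have h := Submodule.finrank_sup_add_finrank_inf_eq (V I) (V J)
    rw [hinf] at h
    exact h
  have hle : Module.finrank K ↥(V I ⊔ V J) ≤
      Module.finrank K (homogeneousSubmodule (Fin N) K t) :=
    Submodule.finrank_mono (sup_le inf_le_left inf_le_left)
  have hI := hilbFn_add_gradedDim I t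
  have hJ := hilbFn_add_gradedDim J t
  have hIJ := hilbFn_add_gradedDim (I ⊓ J) t
  omega

theorem hilbFn_iInf_le (I : Fin s → Ideal (MvPolynomial (Fin N) K)) (t : ℕ) :
    hilbFn K (⨅ i, I i) t ≤ ∑ i, hilbFn K (I i) t := by
  have h (S : Finset (Fin s)) : hilbFn K (⨅ i ∈ S, I i) t ≤ ∑ i ∈ S, hilbFn K (I i) t := by
    induction S using Finset.induction_on with
    | empty => simp [hilbFn_top]
    | insert a S ha ih =>
      rw [Finset.iInf_insert, Finset.sum_insert ha]
      exact (hilbFn_inf_le _ _ t).trans (Nat.add_le_add_left ih _)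
  simpa using h Finset.univ

theorem exists_sub_pow_mul_mem_pointIdeal_pow {P : Fin N → K} {ε : Module.Dual K (Fin N → K)}
    (hε : ε P = 1) (a k : ℕ) {f : MvPolynomial (Fin N) K} (hf : f.IsHomogeneous (a + k)) :
    ∃ g, g.IsHomogeneous a ∧ f - linForm ε ^ k * g ∈ pointIdeal P ^ (a + 1) := by
  induction k generalizing f with
  | zero => exact ⟨f, hf, by simp⟩
  | succ k ih =>
    let y : Fin N → MvPolynomial (Fin N) K := fun j => linForm (LinearMap.proj j - P j • ε)
    have hdvd : linForm ε ∣ f - aeval y f := dvd_sub_aeval (fun j => linForm_dvd_X_sub ε j (P j)) f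
    have hy : (aeval y f).IsHomogeneous (a + (k + 1)) := by
      have h := hf.aeval y fun j => isHomogeneous_linForm _
      rwa [one_mul] at h
    obtain ⟨f', hf', hff'⟩ := exists_isHomogeneous_eq_mul (d := 1) (t := a + k)
      (isHomogeneous_linForm ε) (by convert hf.sub hy using 1; omega) hdvd
    obtain ⟨g, hg, hfg⟩ := ih hf'
    refine ⟨g, hg, ?_⟩
    have hsplit : f - linForm ε ^ (k + 1) * g =
        aeval y f + linForm ε * (f' - linForm ε ^ k * g) := by
      linear_combination hff'
    have hyP : aeval y f ∈ pointIdeal P ^ (a + (k + 1)) :=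
      aeval_mem_pow_of_isHomogeneous (fun j => linForm_mem_pointIdeal (by simp [hε])) hf
    rw [hsplit]
    exact add_mem (Ideal.pow_le_pow_right (by omega) hyP) (Ideal.mul_mem_left _ _ hfg)

theorem hilbFn_le_finrank_homogeneousSubmodule {I : Ideal (MvPolynomial (Fin N) K)} {a k : ℕ}
    {e : MvPolynomial (Fin N) K} (he : e.IsHomogeneous k)
    (h : ∀ f : MvPolynomial (Fin N) K, f.IsHomogeneous (a + k) →
      ∃ g, g.IsHomogeneous a ∧ f - e * g ∈ I) :
    hilbFn K I (a + k) ≤ Module.finrank K (homogeneousSubmodule (Fin N) K a) := by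
  let E := (homogeneousSubmodule (Fin N) K a).map (LinearMap.mulLeft K e)
  have hE : homogeneousSubmodule (Fin N) K (a + k) ≤
      E ⊔ homogeneousSubmodule (Fin N) K (a + k) ⊓ I.restrictScalars K := by
    intro f hf
    obtain ⟨g, hg, hfg⟩ := h f hf
    refine Submodule.mem_sup.2 ⟨e * g, ⟨g, hg, rfl⟩, f - e * g, ⟨?_, hfg⟩, add_sub_cancel _ _⟩
    exact hf.sub (add_comm k a ▸ he.mul hg)
  have hrank := (Submodule.finrank_mono hE).trans (Submodule.finrank_add_le_finrank_add_finrank _ _)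
  have hmap : Module.finrank K E ≤ _ := Submodule.finrank_map_le _ _
  rw [hilbFn, gradedDim]
  omega

theorem hilbFn_pointIdeal_pow_le {P : Fin (n + 1) → K} (hP : P ≠ 0) (m t : ℕ) :
    hilbFn K (pointIdeal P ^ m) t ≤ (m + n - 1).choose n := by
  obtain _ | a := m
  · rw [pow_zero, Ideal.one_eq_top, hilbFn_top]
    exact Nat.zero_le _
  rw [show a + 1 + n - 1 = a + n by omega]
  obtain hta | ⟨k, rfl⟩ := (le_total t a).imp id Nat.exists_eq_add_of_le
  · refine (Nat.sub_le _ _).trans ?_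
    rw [finrank_homogeneousSubmodule]
    exact Nat.choose_le_choose n (by omega)
  · obtain ⟨ε, hε⟩ := exists_dual_eq_one hP
    rw [← finrank_homogeneousSubmodule K]
    refine hilbFn_le_finrank_homogeneousSubmodule ?_
      fun f => exists_sub_pow_mul_mem_pointIdeal_pow hε a k
    simpa only [one_mul] using (isHomogeneous_linForm ε).pow k

theorem hilbFn_fatIdeal_le {p : Fin s → Fin (n + 1) → K} (hp : ∀ i, p i ≠ 0) (m : Fin s → ℕ)
    (t : ℕ) : hilbFn K (fatIdeal p m) t ≤ fatMult n m :=
  (hilbFn_iInf_le _ t).trans (Finset.sum_le_sum fun i _ => hilbFn_pointIdeal_pow_le (hp i) _ t)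

end HilbertFunctions

section LinearAlgebra

theorem finrank_le_add_of_map_le {K E F : Type*} [Field K] [AddCommGroup E] [Module K E]
    [AddCommGroup F] [Module K F] (φ : E →ₗ[K] F) {V U : Submodule K E} {W : Submodule K F}
    [Module.Finite K V] [Module.Finite K U] [Module.Finite K W]
    (hW : V.map φ ≤ W) (hU : V ⊓ LinearMap.ker φ ≤ U) :
    Module.finrank K V ≤ Module.finrank K U + Module.finrank K W := by
  have hker : Module.finrank K (LinearMap.ker (φ.domRestrict V)) ≤ Module.finrank K U := by
    rw [LinearMap.ker_domRestrict, ← Submodule.finrank_map_subtype_eq,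
      Submodule.map_comap_subtype]
    exact Submodule.finrank_mono hU
  have hrange : Module.finrank K (LinearMap.range (φ.domRestrict V)) ≤ Module.finrank K W := by
    rw [LinearMap.range_domRestrict]
    exact Submodule.finrank_mono hW
  have hrank := (φ.domRestrict V).finrank_range_add_finrank_ker
  omega

variable {K : Type*} [Field K] {n : ℕ}

theorem exists_range_eq_ker {ψ : Module.Dual K (Fin (n + 1) → K)} (hψ : ψ ≠ 0) :
    ∃ A : (Fin n → K) →ₗ[K] (Fin (n + 1) → K), LinearMap.range A = LinearMap.ker ψ := by
  have hrank : Module.finrank K (Fin n → K) = Module.finrank K (LinearMap.ker ψ) := by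
    have h := Module.Dual.finrank_ker_add_one_of_ne_zero hψ
    rw [Module.finrank_fin_fun] at h ⊢
    omega
  let e := LinearEquiv.ofFinrankEq _ _ hrank
  exact ⟨(LinearMap.ker ψ).subtype ∘ₗ e, by rw [LinearEquiv.range_comp, Submodule.range_subtype]⟩

theorem exists_dual_ker_eq {W : Submodule K (Fin (n + 1) → K)} (hW : Module.finrank K W = n) :
    ∃ ψ : Module.Dual K (Fin (n + 1) → K), ψ ≠ 0 ∧ LinearMap.ker ψ = W := by
  have hlt : W < ⊤ := by
    refine lt_top_iff_ne_top.2 ?_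
    rintro rfl
    simp at hW
  obtain ⟨ψ, hψ, hWψ⟩ := Submodule.exists_dual_map_eq_bot_of_lt_top hlt inferInstance
  refine ⟨ψ, hψ, (Submodule.eq_of_le_of_finrank_eq ?_ ?_).symm⟩
  · exact Submodule.map_le_iff_le_comap.1 hWψ.le
  · have h := Module.Dual.finrank_ker_add_one_of_ne_zero hψ
    rw [Module.finrank_fin_fun] at h
    omega

end LinearAlgebra

section Residuation

variable {K : Type} [Field K] {N n r s : ℕ}

theorem gradedDim_residualMult_le {p : Fin s → Fin N → K} {S : Finset (Fin s)}
    {ψ : Module.Dual K (Fin N → K)} (hψ : ψ ≠ 0) (hS : ∀ i ∈ S, ψ (p i) = 0) (m : Fin s → ℕ)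
    (t : ℕ) :
    gradedDim K (fatIdeal p (residualMult S m)) t ≤ gradedDim K (fatIdeal p m) (t + 1) := by
  have hinj : Function.Injective (LinearMap.mulLeft K (linForm ψ)) :=
    mul_right_injective₀ (linForm_ne_zero hψ)
  rw [gradedDim, (Submodule.equivMapOfInjective _ hinj _).finrank_eq]
  refine Submodule.finrank_mono ?_
  rintro _ ⟨f, ⟨hft, hf⟩, rfl⟩
  exact ⟨add_comm 1 t ▸ (isHomogeneous_linForm ψ).mul hft, linForm_mul_mem_fatIdeal hS hf⟩

theorem gradedDim_succ_le {p : Fin s → Fin N → K} (hp : ∀ i, p i ≠ 0) {S : Finset (Fin s)}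
    {ψ : Module.Dual K (Fin N → K)} (hψ : ψ ≠ 0) (hS : ∀ i, ψ (p i) = 0 → i ∈ S)
    {A : (Fin n → K) →ₗ[K] (Fin N → K)} (hA : LinearMap.ker ψ ≤ LinearMap.range A)
    {ι : Fin r → Fin s} {q : Fin r → Fin n → K} (hq : ∀ j, A (q j) = p (ι j)) (m : Fin s → ℕ)
    (t : ℕ) :
    gradedDim K (fatIdeal p m) (t + 1) ≤
      gradedDim K (fatIdeal p (residualMult S m)) t + gradedDim K (fatIdeal q (m ∘ ι)) (t + 1) := by
  let V (I : Ideal (MvPolynomial (Fin N) K)) (d : ℕ) : Submodule K (MvPolynomial (Fin N) K) :=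
    homogeneousSubmodule (Fin N) K d ⊓ I.restrictScalars K
  let W := homogeneousSubmodule (Fin n) K (t + 1) ⊓ (fatIdeal q (m ∘ ι)).restrictScalars K
  let U := (V (fatIdeal p (residualMult S m)) t).map (LinearMap.mulLeft K (linForm ψ))
  have hW : (V (fatIdeal p m) (t + 1)).map (pullback A).toLinearMap ≤ W := by
    rintro _ ⟨f, ⟨hft, hf⟩, rfl⟩
    refine ⟨isHomogeneous_pullback A hft, mem_fatIdeal.2 fun j => ?_⟩
    refine pullback_mem_pointIdeal_pow A ?_
    rw [hq]
    exact mem_fatIdeal.1 hf (ι j)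
  have hU : V (fatIdeal p m) (t + 1) ⊓ LinearMap.ker (pullback A).toLinearMap ≤ U := by
    rintro f ⟨⟨hft, hf⟩, hf0⟩
    obtain ⟨g, hg, rfl⟩ := exists_isHomogeneous_eq_mul (isHomogeneous_linForm ψ)
      (add_comm t 1 ▸ hft) (linForm_dvd_of_pullback_eq_zero hψ hA hf0)
    exact ⟨g, ⟨hg, mem_fatIdeal_residualMult_of_linForm_mul_mem hp hψ hS hf⟩, rfl⟩
  exact (finrank_le_add_of_map_le _ hW hU).trans
    (Nat.add_le_add_right (Submodule.finrank_map_le _ _) _)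

end Residuation

section ProjectiveLine

variable {K : Type} [Field K] {N r s : ℕ}

theorem gradedDim_fatIdeal_zero {p : Fin s → Fin N → K} {m : Fin s → ℕ} {i : Fin s}
    (hi : m i ≠ 0) : gradedDim K (fatIdeal p m) 0 = 0 := by
  refine Submodule.finrank_eq_zero.2 ((Submodule.eq_bot_iff _).2 ?_)
  rintro f ⟨hf0, hf⟩
  obtain ⟨a, rfl⟩ : ∃ a, f = C a :=
    ⟨_, totalDegree_eq_zero_iff_eq_C.1 ((totalDegree_zero_iff_isHomogeneous _).2 hf0)⟩
  have ha := eval_eq_zero_of_mem_pointIdeal (Ideal.pow_le_self hi (mem_fatIdeal.1 hf i))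
  rw [eval_C] at ha
  rw [ha, map_zero]

theorem pointIdeal_eq_bot {P : Fin 1 → K} (hP : P ≠ 0) : pointIdeal P = ⊥ := by
  rw [pointIdeal, Ideal.span_eq_bot]
  rintro f ⟨hf, hfP⟩
  obtain ⟨ψ, rfl⟩ := exists_linForm_eq hf
  rw [eval_linForm] at hfP
  have hspan : Submodule.span K {P} = ⊤ :=
    (finrank_eq_one_iff_of_nonzero P hP).1 (Module.finrank_fin_fun K)
  have hψ : ψ = 0 := LinearMap.ext_on hspan (by simpa using hfP)
  rw [hψ, map_zero]

theorem gradedDim_fatIdeal_of_fin_one {p : Fin s → Fin 1 → K} {m : Fin s → ℕ} {i : Fin s}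
    (hp : p i ≠ 0) (hi : m i ≠ 0) (t : ℕ) : gradedDim K (fatIdeal p m) t = 0 := by
  refine Submodule.finrank_eq_zero.2 ((Submodule.eq_bot_iff _).2 ?_)
  rintro f ⟨-, hf⟩
  have hfi := Ideal.pow_le_self hi (mem_fatIdeal.1 hf i)
  rwa [pointIdeal_eq_bot hp] at hfi

theorem sum_residualMult_singleton_add_one {m : Fin s → ℕ} {i : Fin s} (hi : m i ≠ 0) :
    ∑ j, residualMult {i} m j + 1 = ∑ j, m j := by
  rw [← Finset.add_sum_erase _ _ (Finset.mem_univ i),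
    ← Finset.add_sum_erase _ m (Finset.mem_univ i)]
  have hne : ∑ j ∈ Finset.univ.erase i, residualMult {i} m j = ∑ j ∈ Finset.univ.erase i, m j :=
    Finset.sum_congr rfl fun j hj => by simp [residualMult, Finset.ne_of_mem_erase hj]
  have heq : residualMult {i} m i = m i - 1 := by simp [residualMult]
  omega

theorem gradedDim_succ_le_of_fin_two {q : Fin r → Fin 2 → K} (hq : ProjDistinct q)
    {m : Fin r → ℕ} {i : Fin r} (hi : m i ≠ 0) (d : ℕ) :
    gradedDim K (fatIdeal q m) (d + 1) ≤ gradedDim K (fatIdeal q (residualMult {i} m)) d := by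
  obtain ⟨ψ, hψ, hker⟩ := exists_dual_ker_eq (finrank_span_singleton (K := K) (hq.1 i))
  have hzero (j) (hj : ψ (q j) = 0) : j ∈ ({i} : Finset (Fin r)) := by
    rw [← LinearMap.mem_ker, hker] at hj
    obtain ⟨c, hc⟩ := Submodule.mem_span_singleton.1 hj
    by_contra hne
    exact hq.2 j i (by simpa using hne) c hc.symm
  obtain ⟨A, hA⟩ := exists_range_eq_ker hψ
  obtain ⟨x, hx⟩ : q i ∈ LinearMap.range A := by
    rw [hA, hker]
    exact Submodule.mem_span_singleton_self _
  have hx0 : x ≠ 0 := by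
    rintro rfl
    exact hq.1 i (by rw [← hx, map_zero])
  have hpoint : gradedDim K (fatIdeal (fun _ : Fin 1 => x) (m ∘ fun _ => i)) (d + 1) = 0 :=
    gradedDim_fatIdeal_of_fin_one (i := 0) hx0 hi (d + 1)
  have h := gradedDim_succ_le hq.1 hψ hzero hA.ge (ι := fun _ : Fin 1 => i) (fun _ => hx) m d
  rwa [hpoint, add_zero] at h

theorem gradedDim_fatIdeal_of_fin_two_le {q : Fin r → Fin 2 → K} (hq : ProjDistinct q)
    (m : Fin r → ℕ) (d : ℕ) : gradedDim K (fatIdeal q m) d ≤ d + 1 - ∑ i, m i := by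
  by_cases hm : ∀ i, m i = 0
  · have h := gradedDim_le_finrank (fatIdeal q m) d
    rw [finrank_homogeneousSubmodule, Nat.choose_one_right] at h
    simpa [hm] using h
  obtain ⟨i, hi⟩ := not_forall.1 hm
  match d with
  | 0 => simp [gradedDim_fatIdeal_zero hi]
  | d + 1 =>
    have hres := gradedDim_fatIdeal_of_fin_two_le hq (residualMult {i} m) d
    have hsum := sum_residualMult_singleton_add_one hi
    have hstep := gradedDim_succ_le_of_fin_two hq hi d
    omega

end ProjectiveLine

section ProjectivePlane

variable {K : Type} [Field K] {s : ℕ}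

theorem gradedDim_succ_le_of_fin_three {p : Fin s → Fin 3 → K} (hp : ProjDistinct p)
    {S : Finset (Fin s)} {ψ : Module.Dual K (Fin 3 → K)} (hψ : ψ ≠ 0)
    (hS : ∀ i, ψ (p i) = 0 ↔ i ∈ S) (m : Fin s → ℕ) (t : ℕ) :
    gradedDim K (fatIdeal p m) (t + 1) ≤
      gradedDim K (fatIdeal p (residualMult S m)) t + (t + 2 - ∑ i ∈ S, m i) := by
  obtain ⟨A, hA⟩ := exists_range_eq_ker hψ
  let ι : Fin S.card → Fin s := fun j => S.equivFin.symm j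
  have hι : Function.Injective ι := Subtype.val_injective.comp S.equivFin.symm.injective
  have hrange (j) : p (ι j) ∈ LinearMap.range A := by
    rw [hA, LinearMap.mem_ker, hS]
    exact (S.equivFin.symm j).2
  choose q hq using hrange
  have hqdist : ProjDistinct q := by
    refine ⟨fun j hj => hp.1 (ι j) ?_, fun i j hij c hc => hp.2 (ι i) (ι j) (hι.ne hij) c ?_⟩
    · rw [← hq, hj, map_zero]
    · rw [← hq, ← hq, hc, map_smul]
  have hsum : ∑ j, (m ∘ ι) j = ∑ i ∈ S, m i := by
    rw [← Finset.sum_coe_sort S m]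
    exact Equiv.sum_comp S.equivFin.symm fun i => m i
  rw [← hsum]
  exact (gradedDim_succ_le hp.1 hψ (fun i => (hS i).1) hA.ge hq m t).trans
    (Nat.add_le_add_left (gradedDim_fatIdeal_of_fin_two_le hqdist _ _) _)

theorem hilbFn_succ_eq_fatMult {p : Fin s → Fin 3 → K} (hp : ProjDistinct p)
    {S : Finset (Fin s)} {ψ : Module.Dual K (Fin 3 → K)} (hψ : ψ ≠ 0)
    (hS : ∀ i, ψ (p i) = 0 ↔ i ∈ S) {m : Fin s → ℕ} {t : ℕ} (hm : ∑ i ∈ S, m i ≤ t + 2)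
    (hres : hilbFn K (fatIdeal p (residualMult S m)) t = fatMult 2 (residualMult S m)) :
    hilbFn K (fatIdeal p m) (t + 1) = fatMult 2 m := by
  refine le_antisymm (hilbFn_fatIdeal_le hp.1 m _) ?_
  have hstep := gradedDim_succ_le_of_fin_three hp hψ hS m t
  have hmult := fatMult_eq_fatMult_residualMult_add 0 S m
  have hdim := hilbFn_add_gradedDim (fatIdeal p m) (t + 1)
  have hdim' := hilbFn_add_gradedDim (fatIdeal p (residualMult S m)) t
  rw [finrank_homogeneousSubmodule] at hdim hdim'
  have hpascal : (t + 1 + 2).choose 2 = (t + 2).choose 1 + (t + 2).choose 2 :=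
    Nat.choose_succ_succ' _ _
  simp only [zero_add, add_zero, Nat.choose_one_right] at hmult hpascal
  omega

theorem sum_le_of_hilbFn_eq_fatMult {p : Fin s → Fin 3 → K} (hp : ∀ i, p i ≠ 0)
    {S : Finset (Fin s)} {ψ : Module.Dual K (Fin 3 → K)} (hψ : ψ ≠ 0)
    (hS : ∀ i ∈ S, ψ (p i) = 0) {m : Fin s → ℕ} {t : ℕ}
    (ht : hilbFn K (fatIdeal p m) t = fatMult 2 m) : ∑ i ∈ S, m i ≤ t + 1 := by
  have hmult := fatMult_eq_fatMult_residualMult_add 0 S m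
  have hdim := hilbFn_add_gradedDim (fatIdeal p m) t
  rw [finrank_homogeneousSubmodule] at hdim
  simp only [zero_add, add_zero, Nat.choose_one_right] at hmult
  obtain _ | t := t
  · simp only [zero_add, Nat.choose_self] at hdim
    omega
  · have hstep := gradedDim_residualMult_le hψ hS m t
    have hres := hilbFn_fatIdeal_le hp (residualMult S m) t
    have hdim' := hilbFn_add_gradedDim (fatIdeal p (residualMult S m)) t
    rw [finrank_homogeneousSubmodule] at hdim'
    have hpascal : (t + 1 + 2).choose 2 = (t + 2).choose 1 + (t + 2).choose 2 :=
      Nat.choose_succ_succ' _ _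
    rw [Nat.choose_one_right] at hpascal
    omega

theorem regFat_eq_of_hilbFn_eq_of_sum_eq {p : Fin s → Fin 3 → K} (hp : ∀ i, p i ≠ 0)
    {S : Finset (Fin s)} {ψ : Module.Dual K (Fin 3 → K)} (hψ : ψ ≠ 0)
    (hS : ∀ i ∈ S, ψ (p i) = 0) {m : Fin s → ℕ} {t : ℕ}
    (ht : hilbFn K (fatIdeal p m) t = fatMult 2 m) (hsum : ∑ i ∈ S, m i = t + 1) :
    regFat K p m = t := by
  have hleast : IsLeast {u | hilbFn K (fatIdeal p m) u = fatMult 2 m} t := by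
    refine ⟨ht, fun u hu => ?_⟩
    have h := sum_le_of_hilbFn_eq_fatMult hp hψ hS hu
    omega
  exact hleast.csInf_eq

end ProjectivePlane

section SegreBound

variable {K : Type} [Field K] {n s : ℕ}

theorem le_segreBound {p : Fin s → Fin (n + 1) → K} {m : Fin s → ℕ} {j : ℕ}
    (hj : j ∈ Finset.Icc 1 n) {Q : Finset (Fin s)} (hQ : Q.Nonempty)
    (hQj : OnLinearSubspace p Q j) : (∑ i ∈ Q, m i + j - 2) / j ≤ segreBound n p m := by
  refine le_trans ?_ (Finset.le_sup (f := fun j => Finset.univ.powerset.sup _) hj)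
  refine le_trans ?_ (Finset.le_sup (Finset.mem_powerset.2 (Finset.subset_univ Q)))
  rw [if_pos ⟨hQ, hQj⟩]

theorem segreBound_le {p : Fin s → Fin (n + 1) → K} {m : Fin s → ℕ} {B : ℕ}
    (h : ∀ j ∈ Finset.Icc 1 n, ∀ Q : Finset (Fin s), OnLinearSubspace p Q j →
      (∑ i ∈ Q, m i + j - 2) / j ≤ B) : segreBound n p m ≤ B := by
  refine Finset.sup_le fun j hj => Finset.sup_le fun Q _ => ?_
  split_ifs with hQ
  · exact h j hj Q hQ.2
  · exact Nat.zero_le B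

end SegreBound

section SixPoints

variable {K : Type} [Field K] {N s : ℕ}

theorem eq_of_two_points_mem {p : Fin s → Fin N → K} (hp : ProjDistinct p) {i j : Fin s}
    (hij : i ≠ j) {W W' : Submodule K (Fin N → K)} (hW : Module.finrank K W ≤ 2)
    (hW' : Module.finrank K W' ≤ 2) (hi : p i ∈ W) (hj : p j ∈ W) (hi' : p i ∈ W')
    (hj' : p j ∈ W') : W = W' := by
  have hindep : LinearIndependent K ![p i, p j] :=
    (LinearIndependent.pair_iff' (hp.1 i)).2 fun c hc => hp.2 j i hij.symm c hc.symm
  have hspan (V : Submodule K (Fin N → K)) (hV : Module.finrank K V ≤ 2) (hVi : p i ∈ V)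
      (hVj : p j ∈ V) : Submodule.span K (Set.range ![p i, p j]) = V := by
    refine Submodule.eq_of_le_of_finrank_le (Submodule.span_le.2 ?_) ?_
    · rintro _ ⟨k, rfl⟩
      fin_cases k
      exacts [hVi, hVj]
    · rwa [finrank_span_eq_card hindep, Fintype.card_fin]
  rw [← hspan W hW hi hj, hspan W' hW' hi' hj']

theorem ne_zero_of_forall_eq_zero_iff {p : Fin s → Fin N → K} {S : Finset (Fin s)}
    {ψ : Module.Dual K (Fin N → K)} (h : ∀ i, ψ (p i) = 0 ↔ i ∈ S) (hS : S ≠ Finset.univ) :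
    ψ ≠ 0 := by
  rintro rfl
  exact hS (Finset.eq_univ_iff_forall.2 fun i => (h i).1 rfl)

theorem card_le_three_of_onLinearSubspace_one {p : Fin 6 → Fin 3 → K} (hp : ProjDistinct p)
    {W₁ W₂ : Submodule K (Fin 3 → K)} (h₁ : Module.finrank K W₁ = 2)
    (h₂ : Module.finrank K W₂ = 2) (hW₁ : ∀ i, p i ∈ W₁ ↔ i ∈ ({0, 1, 2} : Finset (Fin 6)))
    (hW₂ : ∀ i, p i ∈ W₂ ↔ i ∈ ({3, 4} : Finset (Fin 6))) {Q : Finset (Fin 6)}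
    (hQ : OnLinearSubspace p Q 1) : Q.card ≤ 3 := by
  obtain ⟨W, hW, hQW⟩ := hQ
  have hmeet {W' : Submodule K (Fin 3 → K)} (hW' : Module.finrank K W' = 2)
      {S : Finset (Fin 6)} (hS : ∀ i, p i ∈ W' ↔ i ∈ S) (hne : W ≠ W') : (Q ∩ S).card ≤ 1 := by
    refine Finset.card_le_one.2 fun i hi j hj => ?_
    by_contra hij
    rw [Finset.mem_inter, ← hS] at hi hj
    exact hne (eq_of_two_points_mem hp hij hW hW'.le (hQW i hi.1) (hQW j hj.1) hi.2 hj.2)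
  by_cases hWW₁ : W = W₁
  · exact Finset.card_le_card fun i hi => (hW₁ i).1 (hWW₁ ▸ hQW i hi)
  by_cases hWW₂ : W = W₂
  · have hle : Q.card ≤ 2 := Finset.card_le_card fun i hi => (hW₂ i).1 (hWW₂ ▸ hQW i hi)
    omega
  have hcover : Q ⊆ Q ∩ {0, 1, 2} ∪ Q ∩ {3, 4} ∪ {5} := by
    intro i hi
    simp only [Finset.mem_union, Finset.mem_inter, hi, true_and]
    exact (by decide : ∀ i : Fin 6, (i ∈ ({0, 1, 2} : Finset (Fin 6)) ∨
      i ∈ ({3, 4} : Finset (Fin 6))) ∨ i ∈ ({5} : Finset (Fin 6))) i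
  have hcard := (Finset.card_le_card hcover).trans (Finset.card_union_le _ _)
  have hunion := Finset.card_union_le (Q ∩ {0, 1, 2}) (Q ∩ {3, 4})
  have hmeet₁ := hmeet h₁ hW₁ hWW₁
  have hmeet₂ := hmeet h₂ hW₂ hWW₂
  rw [Finset.card_singleton] at hcard
  omega

theorem segreBound_two_eq_three_mul {p : Fin 6 → Fin 3 → K}
    (hline : ∀ Q : Finset (Fin 6), OnLinearSubspace p Q 1 → Q.card ≤ 3) (m : ℕ) :
    segreBound 2 p (fun _ => m) = 3 * m := by
  refine le_antisymm (segreBound_le fun j hj Q hQ => ?_) ?_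
  · rw [Finset.sum_const, smul_eq_mul]
    obtain rfl | rfl : j = 1 ∨ j = 2 := by
      rw [Finset.mem_Icc] at hj
      omega
    · have hle := Nat.mul_le_mul_right m (hline Q hQ)
      omega
    · have hle := Nat.mul_le_mul_right m (card_finset_fin_le Q)
      omega
  · have hplane : OnLinearSubspace p Finset.univ 2 := ⟨⊤, by simp, fun _ _ => Submodule.mem_top⟩
    have hle := le_segreBound (m := fun _ => m) (show 2 ∈ Finset.Icc 1 2 by simp)
      Finset.univ_nonempty hplane
    simp only [Finset.sum_const, Finset.card_univ, Fintype.card_fin, smul_eq_mul] at hle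
    omega

theorem exists_third_line {p : Fin 6 → Fin 3 → K} {ψ₁ ψ₂ : Module.Dual K (Fin 3 → K)}
    (h₁ : ∀ i, ψ₁ (p i) = 0 ↔ i ∈ ({0, 1, 2} : Finset (Fin 6)))
    (h₂ : ∀ i, ψ₂ (p i) = 0 ↔ i ∈ ({3, 4} : Finset (Fin 6))) :
    ∃ ψ₃ : Module.Dual K (Fin 3 → K), ∀ i, ψ₃ (p i) = 0 ↔ i ∈ ({5} : Finset (Fin 6)) := by
  -- the member through `p 5` of the pencil spanned by the two lines
  refine ⟨ψ₁ (p 5) • ψ₂ - ψ₂ (p 5) • ψ₁, fun i => ?_⟩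
  have h₁5 : ψ₁ (p 5) ≠ 0 := fun h => absurd ((h₁ 5).1 h) (by decide)
  have h₂5 : ψ₂ (p 5) ≠ 0 := fun h => absurd ((h₂ 5).1 h) (by decide)
  simp only [LinearMap.sub_apply, LinearMap.smul_apply, smul_eq_mul]
  obtain hi | hi | rfl : i ∈ ({0, 1, 2} : Finset (Fin 6)) ∨ i ∈ ({3, 4} : Finset (Fin 6)) ∨
    i = 5 := by decide +revert
  · rw [(h₁ i).2 hi, mul_zero, sub_zero, mul_eq_zero, or_iff_right h₁5, h₂]
    decide +revert
  · rw [(h₂ i).2 hi, mul_zero, zero_sub, neg_eq_zero, mul_eq_zero, or_iff_right h₂5, h₁]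
    decide +revert
  · simp [mul_comm]

theorem residualMult_three_lines (k : ℕ) :
    residualMult ({5} : Finset (Fin 6)) (residualMult {3, 4} (residualMult {0, 1, 2}
      fun _ => k + 1)) = fun _ => k := by
  funext i
  fin_cases i <;> rfl

theorem hilbFn_eq_fatMult_of_two_lines {p : Fin 6 → Fin 3 → K} (hp : ProjDistinct p)
    {ψ₁ ψ₂ : Module.Dual K (Fin 3 → K)}
    (h₁ : ∀ i, ψ₁ (p i) = 0 ↔ i ∈ ({0, 1, 2} : Finset (Fin 6)))
    (h₂ : ∀ i, ψ₂ (p i) = 0 ↔ i ∈ ({3, 4} : Finset (Fin 6))) {k : ℕ}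
    (hres : hilbFn K (fatIdeal p (residualMult {3, 4} (residualMult {0, 1, 2}
      fun _ => k + 1))) (3 * k) = fatMult 2 (residualMult {3, 4} (residualMult {0, 1, 2}
      fun _ : Fin 6 => k + 1))) :
    hilbFn K (fatIdeal p fun _ => k + 1) (3 * k + 2) = fatMult 2 fun _ : Fin 6 => k + 1 := by
  have hsum₁ : ∑ _i ∈ ({0, 1, 2} : Finset (Fin 6)), (k + 1) ≤ 3 * k + 1 + 2 := by
    rw [Finset.sum_const, show ({0, 1, 2} : Finset (Fin 6)).card = 3 from rfl, smul_eq_mul]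
    omega
  have hsum₂ : ∑ i ∈ ({3, 4} : Finset (Fin 6)), residualMult {0, 1, 2} (fun _ => k + 1) i
      ≤ 3 * k + 2 := by
    rw [Finset.sum_pair (by decide)]
    change k + 1 + (k + 1) ≤ 3 * k + 2
    omega
  refine hilbFn_succ_eq_fatMult hp (ne_zero_of_forall_eq_zero_iff h₁ (by decide)) h₁ hsum₁ ?_
  exact hilbFn_succ_eq_fatMult hp (ne_zero_of_forall_eq_zero_iff h₂ (by decide)) h₂ hsum₂ hres

theorem hilbFn_eq_fatMult_of_three_lines {p : Fin 6 → Fin 3 → K} (hp : ProjDistinct p)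
    {ψ₁ ψ₂ ψ₃ : Module.Dual K (Fin 3 → K)}
    (h₁ : ∀ i, ψ₁ (p i) = 0 ↔ i ∈ ({0, 1, 2} : Finset (Fin 6)))
    (h₂ : ∀ i, ψ₂ (p i) = 0 ↔ i ∈ ({3, 4} : Finset (Fin 6)))
    (h₃ : ∀ i, ψ₃ (p i) = 0 ↔ i ∈ ({5} : Finset (Fin 6))) (k : ℕ) :
    hilbFn K (fatIdeal p fun _ => k + 1) (3 * k + 2) = fatMult 2 fun _ : Fin 6 => k + 1 := by
  induction k with
  | zero =>
    refine hilbFn_eq_fatMult_of_two_lines hp h₁ h₂ ?_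
    have hdim := hilbFn_add_gradedDim (fatIdeal p (residualMult {3, 4} (residualMult {0, 1, 2}
      fun _ => 0 + 1))) 0
    rw [gradedDim_fatIdeal_zero (i := 5) one_ne_zero, finrank_homogeneousSubmodule] at hdim
    exact hdim
  | succ k ih =>
    refine hilbFn_eq_fatMult_of_two_lines hp h₁ h₂ ?_
    refine hilbFn_succ_eq_fatMult hp (ne_zero_of_forall_eq_zero_iff h₃ (by decide)) h₃
      (t := 3 * k + 2) ?_ ?_
    · rw [Finset.sum_singleton]
      change k + 1 + 1 ≤ 3 * k + 2 + 2
      omega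
    · rw [residualMult_three_lines]
      exact ih

theorem regFat_eq_three_mul_sub_one {p : Fin 6 → Fin 3 → K} (hp : ProjDistinct p)
    {ψ₁ ψ₂ : Module.Dual K (Fin 3 → K)}
    (h₁ : ∀ i, ψ₁ (p i) = 0 ↔ i ∈ ({0, 1, 2} : Finset (Fin 6)))
    (h₂ : ∀ i, ψ₂ (p i) = 0 ↔ i ∈ ({3, 4} : Finset (Fin 6))) {m : ℕ} (hm : 0 < m) :
    regFat K p (fun _ => m) = 3 * m - 1 := by
  obtain ⟨k, rfl⟩ := Nat.exists_eq_add_one.2 hm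
  obtain ⟨ψ₃, h₃⟩ := exists_third_line h₁ h₂
  have hψ₁ : ψ₁ ≠ 0 := ne_zero_of_forall_eq_zero_iff h₁ (by decide)
  have hsum : ∑ _i ∈ ({0, 1, 2} : Finset (Fin 6)), (k + 1) = 3 * k + 2 + 1 := by
    rw [Finset.sum_const, show ({0, 1, 2} : Finset (Fin 6)).card = 3 from rfl, smul_eq_mul]
    omega
  exact regFat_eq_of_hilbFn_eq_of_sum_eq hp.1 hψ₁ (fun i => (h₁ i).2)
    (hilbFn_eq_fatMult_of_three_lines hp h₁ h₂ h₃ k) hsum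

end SixPoints

theorem stmt12_general {K : Type} [Field K]
    (W₁ W₂ : Submodule K (Fin 3 → K))
    (h1 : Module.finrank K ↥W₁ = 2) (h2 : Module.finrank K ↥W₂ = 2)
    (p : Fin 6 → Fin 3 → K) (hdist : ProjDistinct p)
    (h123 : ∀ i : Fin 6, (i : ℕ) < 3 → p i ∈ W₁ ∧ p i ∉ W₂)
    (h45 : ∀ i : Fin 6, (i : ℕ) = 3 ∨ (i : ℕ) = 4 → p i ∈ W₂ ∧ p i ∉ W₁)
    (h6 : p 5 ∉ W₁ ∧ p 5 ∉ W₂)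
    (m : ℕ) (hm : 0 < m) :
    regFat K p (fun _ => m) = 3 * m - 1 ∧
    segreBound 2 p (fun _ => m) = 3 * m ∧
    regFat K p (fun _ => m) < segreBound 2 p (fun _ => m) := by
  have hW₁ (i) : p i ∈ W₁ ↔ i ∈ ({0, 1, 2} : Finset (Fin 6)) := by
    fin_cases i <;> simp [h123, h45, h6]
  have hW₂ (i) : p i ∈ W₂ ↔ i ∈ ({3, 4} : Finset (Fin 6)) := by
    fin_cases i <;> simp [h123, h45, h6]
  obtain ⟨ψ₁, -, rfl⟩ := exists_dual_ker_eq h1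
  obtain ⟨ψ₂, -, rfl⟩ := exists_dual_ker_eq h2
  have hreg : regFat K p (fun _ => m) = 3 * m - 1 := regFat_eq_three_mul_sub_one hdist hW₁ hW₂ hm
  have hsegre : segreBound 2 p (fun _ => m) = 3 * m := segreBound_two_eq_three_mul
    (fun _ => card_le_three_of_onLinearSubspace_one hdist h1 h2 hW₁ hW₂) m
  exact ⟨hreg, hsegre, by omega⟩

/-- Example 4.4: for the configuration of six points on two lines in `ℙ²`,
`reg(Z) = 3m - 1 < T(Z) = T₂(Z) = 3m`. -/
theorem stmt12 {K : Type} [Field K] [IsAlgClosed K]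
    (W₁ W₂ : Submodule K (Fin 3 → K))
    (h1 : Module.finrank K ↥W₁ = 2) (h2 : Module.finrank K ↥W₂ = 2) (hW : W₁ ≠ W₂)
    (p : Fin 6 → Fin 3 → K) (hdist : ProjDistinct p)
    (h123 : ∀ i : Fin 6, (i : ℕ) < 3 → p i ∈ W₁ ∧ p i ∉ W₂)
    (h45 : ∀ i : Fin 6, (i : ℕ) = 3 ∨ (i : ℕ) = 4 → p i ∈ W₂ ∧ p i ∉ W₁)
    (h6 : p 5 ∉ W₁ ∧ p 5 ∉ W₂)
    (m : ℕ) (hm : 0 < m) :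
    regFat K p (fun _ => m) = 3 * m - 1 ∧
    segreBound 2 p (fun _ => m) = 3 * m ∧
    regFat K p (fun _ => m) < segreBound 2 p (fun _ => m) :=
  stmt12_general W₁ W₂ h1 h2 p hdist h123 h45 h6 m hm
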